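/- Let ℓ ∈ {1, 2, 3} and let δ_ℓ(ξ³) := lim_{i→∞} {x_{ℓ+6i,0}·ξ³} (this limit exists). There exist constants c₄, c₅ > 0 such that for every integer k ≥ 1 with k ≢ ℓ (mod 3) there is an integer y_k with gcd(x_{k,0}, y_k) dividing 2 and c₄·B_k ≤ |x_{k,0}·δ_ℓ(ξ³) − y_k| ≤ c₅·B_k, where B_k = 1/X_{k+1} if k ≡ ℓ+1 (mod 3) and B_k = 1/X_{k+2} if k ≡ ℓ+2 (mod 3). Moreover, for all sufficiently large such k, the rational number y_k/x_{k,0} is a convergent of the continued fraction expansion of δ_ℓ(ξ³) whose denominator in lowest terms is |x_{k,0}| or |x_{k,0}|/2, and there exist constants c₆, c₇ > 0 such that every other convergent p/q of δ_ℓ(ξ³) in lowest terms satisfies c₆/q ≤ |q·δ_ℓ(ξ³) − p| ≤ c₇/q. -/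

import Mathlib

open Polynomial Filter

noncomputable def gold : ℝ := (1 + Real.sqrt 5) / 2

def Mmat (k : ℕ) : Matrix (Fin 2) (Fin 2) ℤ := !![3, (-1)^k; (-1)^(k+1), 0]

noncomputable def Xnorm (x : ℕ → Matrix (Fin 2) (Fin 2) ℤ) (k : ℕ) : ℝ :=
  max |(x k 0 0 : ℝ)| (max |(x k 0 1 : ℝ)| |(x k 1 1 : ℝ)|)

def MarkoffSeq (ξ : ℝ) (x : ℕ → Matrix (Fin 2) (Fin 2) ℤ) : Prop :=
  (∀ k, 1 ≤ k → x k 0 1 = x k 1 0) ∧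
  (∀ k, 1 ≤ k → (x k).det = 1) ∧
  ∃ c₁ c₂ c₃ : ℝ, 0 < c₁ ∧ 0 < c₂ ∧ 0 < c₃ ∧ ∀ k, 1 ≤ k →
    (c₁ * Xnorm x k ^ gold ≤ Xnorm x (k+1) ∧ Xnorm x (k+1) ≤ c₂ * Xnorm x k ^ gold) ∧
    (|(x k 0 0 : ℝ) * ξ - (x k 0 1 : ℝ)| ≤ c₃ / Xnorm x k ∧
     |(x k 0 1 : ℝ) * ξ - (x k 1 1 : ℝ)| ≤ c₃ / Xnorm x k) ∧
    (x (k+2) = x (k+1) * Mmat (k+1) * x k ∧ x (k+2) = x k * Mmat k * x (k+1)) ∧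
    (Xnorm x k < Xnorm x (k+1) ∧ Xnorm x k < (1 + ξ^2) * |(x k 0 0 : ℝ)|)

def polyNorm (P : Polynomial ℤ) : ℕ := P.support.sup fun i => (P.coeff i).natAbs

noncomputable def distInt (η : ℝ) : ℝ := |η - round η|

noncomputable def ratHeight (α : ℚ) : ℝ := max |(α.num : ℝ)| (α.den : ℝ)

def IsMinIntPoly (α : ℂ) (P : Polynomial ℤ) : Prop :=
  P ≠ 0 ∧ Polynomial.aeval α P = 0 ∧ P.content = 1 ∧ 0 < P.leadingCoeff ∧
  ∀ Q : Polynomial ℤ, Q ≠ 0 → Polynomial.aeval α Q = 0 → P.degree ≤ Q.degree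

noncomputable def Qpoly (x : ℕ → Matrix (Fin 2) (Fin 2) ℤ) (k : ℕ) : Polynomial ℤ :=
  Polynomial.C (x k 0 1 * x (k+1) 1 1 - x k 1 1 * x (k+1) 0 1)
  - Polynomial.C (x k 0 0 * x (k+1) 1 1 - x k 1 1 * x (k+1) 0 0) * Polynomial.X
  + Polynomial.C (x k 0 0 * x (k+1) 0 1 - x k 0 1 * x (k+1) 0 0) * Polynomial.X ^ 2

/-!
Write `a`, `b`, `c` for the entries `(0, 0)`, `(0, 1)`, `(1, 1)` of `x`. By Cayley-Hamilton
`x (k + 3) = 3 a_{k+1} x (k + 2) - x k`, and `3 a_{k+1} c_{k+2} ξ` is within `O(1 / X_k)` of an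
integer. So `c_{k+3} ξ ≡ -c_k ξ` modulo `1` up to that error, and the distance from `c_k ξ` to `ℤ`
converges along each residue class modulo `3`, as does that of `a_k ξ ^ 3`, which is close to
`c_k ξ`. Moreover `a_k c_{k+2} ξ` and `a_k c_{k+4} ξ` are within `O(1 / X_{k+1})` and
`O(1 / X_{k+2})` of explicit integers whose gcd with `a_k` divides `2`, and up to sign and multiples
of `a_k` these give `y_k`.

Along the indices `k ≢ ℓ` the fractions `y_k / a_k` thus approximate `δ` with error
`a_k δ - y_k = O(1 / a_{k'})`, where `k'` is the next such index and `a_k = o(a_{k'})`. Consecutive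
fractions differ because their reduced denominators do, which turns the upper bound into a
two-sided one. They are convergents by Legendre's theorem, and any other fraction `p / q` differs
from the one with `a_k ≪ q ≪ a_{k'}`, which bounds `|q δ - p|` from below.
-/

section Convergents

variable {K : Type*} [Field K] [LinearOrder K] [FloorRing K]

theorem exists_int_contsAux_of (v : K) (n : ℕ) :
    (∃ A B : ℤ, (GenContFract.of v).contsAux n = ⟨A, B⟩) ∧
      ∃ A B : ℤ, (GenContFract.of v).contsAux (n + 1) = ⟨A, B⟩ := by
  induction n with
  | zero =>
    exact ⟨⟨1, 0, by simp [GenContFract.contsAux]⟩,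
      ⟨⌊v⌋, 1, by simp [GenContFract.contsAux, GenContFract.of_h_eq_floor]⟩⟩
  | succ n ih =>
    obtain ⟨⟨A, B, h⟩, ⟨A', B', h'⟩⟩ := ih
    refine ⟨⟨A', B', h'⟩, ?_⟩
    cases hs : (GenContFract.of v).s.get? n with
    | none => exact ⟨A', B', (GenContFract.contsAux_stable_step_of_terminated hs).trans h'⟩
    | some gp =>
      obtain ⟨ha, z, hz⟩ := GenContFract.of_partNum_eq_one_and_exists_int_partDen_eq hs
      refine ⟨z * A' + A, z * B' + B, ?_⟩
      rw [GenContFract.contsAux_recurrence hs h h', ha, hz]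
      push_cast
      simp only [one_mul]

theorem exists_int_nums_dens_of (v : K) (n : ℕ) :
    ∃ A B : ℤ, (GenContFract.of v).nums n = A ∧ (GenContFract.of v).dens n = B := by
  obtain ⟨A, B, h⟩ := (exists_int_contsAux_of v n).2
  refine ⟨A, B, ?_, ?_⟩
  · rw [GenContFract.num_eq_conts_a, GenContFract.nth_cont_eq_succ_nth_contAux, h]
  · rw [GenContFract.den_eq_conts_b, GenContFract.nth_cont_eq_succ_nth_contAux, h]

variable [IsStrictOrderedRing K]

theorem dens_of_pos {v : K} {n : ℕ} (h : ¬(GenContFract.of v).TerminatedAt n) :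
    0 < (GenContFract.of v).dens n := by
  have hfib : (0 : K) < Nat.fib (n + 1) := Nat.cast_pos.2 (Nat.fib_pos.2 n.succ_pos)
  exact hfib.trans_le <| GenContFract.succ_nth_fib_le_of_nth_den <|
    Or.inr fun h' => h (GenContFract.terminated_stable n.pred_le h')

theorem den_le_dens_of_convs_eq {v : K} {n : ℕ} {r : ℚ}
    (h : ¬(GenContFract.of v).TerminatedAt n) (hr : (GenContFract.of v).convs n = r) :
    (r.den : K) ≤ (GenContFract.of v).dens n := by
  obtain ⟨A, B, hA, hB⟩ := exists_int_nums_dens_of v n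
  have hpos := dens_of_pos h
  rw [GenContFract.conv_eq_num_div_den, hA, hB] at hr
  rw [hB] at hpos ⊢
  have hr' : r = Rat.divInt A B := by
    rw [Rat.divInt_eq_div]
    exact_mod_cast hr.symm
  have hle : (r.den : ℤ) ≤ B :=
    Int.le_of_dvd (by exact_mod_cast hpos) (hr' ▸ Rat.den_dvd A B)
  exact_mod_cast hle

theorem abs_sub_le_of_convs_eq {v : K} {n : ℕ} {r : ℚ} (hr : (GenContFract.of v).convs n = r) :
    |v - r| ≤ 1 / (r.den : K) ^ 2 := by
  by_cases h : (GenContFract.of v).TerminatedAt n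
  · rw [← hr, ← GenContFract.of_correctness_of_terminatedAt h, sub_self, abs_zero]
    positivity
  · have hle := den_le_dens_of_convs_eq h hr
    have : (0 : K) < r.den := Nat.cast_pos.2 r.den_pos
    rw [← hr, sq]
    refine (GenContFract.abs_sub_convs_le h).trans ?_
    gcongr
    exacts [(dens_of_pos h).le, hle.trans GenContFract.of_den_mono]

theorem abs_mul_sub_le_of_convs_eq {v : K} {n : ℕ} {p : ℤ} {q : ℕ} (hq : 0 < q)
    (hpq : p.natAbs.Coprime q) (h : (GenContFract.of v).convs n = (p : K) / q) :
    |q * v - p| ≤ 1 / q := by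
  have hden : ((p / q : ℚ)).den = q := by
    exact_mod_cast Rat.den_div_eq_of_coprime (Int.natCast_pos.2 hq) (by simpa using hpq)
  have hle : |v - p / q| ≤ 1 / (q : K) ^ 2 := by
    have := abs_sub_le_of_convs_eq (r := p / q) (h.trans (by push_cast; rfl))
    rw [hden] at this
    exact_mod_cast this
  have hq' : (0 : K) < q := Nat.cast_pos.2 hq
  calc |q * v - p| = q * |v - p / q| := by
        rw [← abs_of_pos hq', ← abs_mul, abs_of_pos hq', mul_sub, mul_div_cancel₀ _ hq'.ne']
    _ ≤ q * (1 / (q : K) ^ 2) := by gcongr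
    _ = 1 / q := by field_simp

end Convergents

theorem exists_convs_eq_div {δ : ℝ} {a y : ℤ} (ha : a ≠ 0)
    (h : |a * δ - y| < 1 / (2 * |(a : ℝ)|)) :
    ∃ n, (GenContFract.of δ).convs n = y / a := by
  have : (0 : ℝ) < |(a : ℝ)| := abs_pos.2 (Int.cast_ne_zero.2 ha)
  have hden : ((y / a : ℚ).den : ℝ) ≤ |(a : ℝ)| := by
    have hdvd : ((y / a : ℚ).den : ℤ) ∣ a := Rat.divInt_eq_div y a ▸ Rat.den_dvd y a
    exact_mod_cast Int.le_of_dvd (abs_pos.2 ha) ((dvd_abs _ _).2 hdvd)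
  obtain ⟨n, hn⟩ := Real.exists_convs_eq_rat (ξ := δ) (q := y / a) <| by
    calc |δ - (y / a : ℚ)| = |a * δ - y| / |(a : ℝ)| := by
          rw [← abs_div, sub_div, mul_div_cancel_left₀ _ (Int.cast_ne_zero.2 ha)]
          push_cast
          rfl
      _ < 1 / (2 * |(a : ℝ)|) / |(a : ℝ)| := by gcongr
      _ = 1 / (2 * |(a : ℝ)| ^ 2) := by field_simp
      _ ≤ 1 / (2 * ((y / a : ℚ).den : ℝ) ^ 2) := by
          have := (y / a : ℚ).den_pos
          gcongr
  exact ⟨n, hn.trans (by push_cast; rfl)⟩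

theorem den_div_of_gcd_dvd_two {a y : ℤ} (ha : a ≠ 0) (h : Int.gcd a y ∣ 2) :
    (y / a : ℚ).den = a.natAbs ∨ 2 * (y / a : ℚ).den = a.natAbs := by
  have hden : (y / a : ℚ).den = a.natAbs / Int.gcd a y := by
    rw [← Rat.divInt_eq_div, Rat.den_divInt, if_neg ha, Int.gcd_comm, Int.gcd]
  have hdvd : Int.gcd a y ∣ a.natAbs := Int.natCast_dvd.1 (Int.gcd_dvd_left a y)
  rcases (Nat.dvd_prime Nat.prime_two).1 h with h1 | h2
  · left
    rw [hden, h1, Nat.div_one]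
  · right
    rw [hden, h2, Nat.mul_div_cancel' (h2 ▸ hdvd)]

section AsymptoticComparison

open Asymptotics Topology

theorem exists_bounds_of_isTheta_atTop {E F : Type*} [NormedAddCommGroup E]
    [NormedAddCommGroup F] {f : ℕ → E} {g : ℕ → F} (h : f =Θ[atTop] g) (hf : ∀ n, f n ≠ 0)
    (hg : ∀ n, g n ≠ 0) :
    ∃ c₁ > 0, ∃ c₂ > 0, ∀ n, c₁ * ‖g n‖ ≤ ‖f n‖ ∧ ‖f n‖ ≤ c₂ * ‖g n‖ := by
  obtain ⟨A, hA⟩ := (isBigO_nat_atTop_iff fun n hn => absurd hn (hg n)).1 h.1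
  obtain ⟨B, hB⟩ := (isBigO_nat_atTop_iff fun n hn => absurd hn (hf n)).1 h.2
  have hf₀ := norm_pos_iff.2 (hf 0)
  have hg₀ := norm_pos_iff.2 (hg 0)
  have hA₀ : 0 < A := pos_of_mul_pos_left (hf₀.trans_le (hA 0)) hg₀.le
  have hB₀ : 0 < B := pos_of_mul_pos_left (hg₀.trans_le (hB 0)) hf₀.le
  exact ⟨B⁻¹, inv_pos.2 hB₀, A, hA₀, fun n => ⟨(inv_mul_le_iff₀ hB₀).2 (hB n), hA n⟩⟩

theorem isBigO_ite {α E F : Type*} [Norm E] [SeminormedAddGroup F] {l : Filter α}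
    {f₁ f₂ : α → E} {g₁ g₂ : α → F} (p : α → Prop) [DecidablePred p]
    (h₁ : f₁ =O[l] g₁) (h₂ : f₂ =O[l] g₂) :
    (fun k => if p k then f₁ k else f₂ k) =O[l] fun k => if p k then g₁ k else g₂ k := by
  obtain ⟨c₁, hc₁⟩ := h₁.bound
  obtain ⟨c₂, hc₂⟩ := h₂.bound
  refine IsBigO.of_bound (max c₁ c₂) ?_
  filter_upwards [hc₁, hc₂] with k hk₁ hk₂
  split_ifs
  · exact hk₁.trans (mul_le_mul_of_nonneg_right (le_max_left _ _) (norm_nonneg _))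
  · exact hk₂.trans (mul_le_mul_of_nonneg_right (le_max_right _ _) (norm_nonneg _))

theorem eq_of_periodic_of_mod_eq {α : Type*} {f : ℕ → α} {p m n : ℕ} (hf : Function.Periodic f p)
    (h : m % p = n % p) : f m = f n := by
  rw [← hf.map_mod_nat m, h, hf.map_mod_nat]

theorem exists_periodic_sub_isBigO {E F : Type*} [NormedAddCommGroup E] [CompleteSpace E]
    [NormedAddCommGroup F] {u : ℕ → E} {w : ℕ → F} {p : ℕ}
    (hstep : (fun m => u (m + p) - u m) =O[atTop] w)
    (hdecay : ∀ᶠ m in atTop, 2 * ‖w (m + p)‖ ≤ ‖w m‖) :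
    ∃ δ : ℕ → E, Function.Periodic δ p ∧ (fun m => u m - δ m) =O[atTop] w := by
  obtain ⟨C, hC₀, hC⟩ := hstep.exists_nonneg
  obtain ⟨M, hM⟩ := eventually_atTop.1 (hC.bound.and hdecay)
  refine ⟨fun m => limUnder atTop fun i => u (m + p * i), fun m => ?_,
    IsBigO.of_bound (2 * C) (eventually_atTop.2 ⟨M, fun m hm => ?_⟩)⟩
  · have hshift : (fun i => u (m + p + p * i)) = (fun i => u (m + p * i)) ∘ (· + 1) := by
      funext i
      simp only [Function.comp_apply, mul_add_one, add_assoc, add_comm p]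
    simp only [limUnder]
    rw [hshift, ← Filter.map_map, map_add_atTop_eq_nat]
  · have hw : ∀ i, ‖w (m + p * i)‖ ≤ ‖w m‖ / 2 ^ i := fun i => by
      induction i with
      | zero => simp
      | succ i ih =>
        calc ‖w (m + p * (i + 1))‖ ≤ ‖w (m + p * i)‖ / 2 := by
              rw [le_div_iff₀' two_pos, mul_add_one, ← add_assoc]
              exact (hM (m + p * i) (hm.trans (Nat.le_add_right _ _))).2
          _ ≤ ‖w m‖ / 2 ^ i / 2 := by gcongr
          _ = ‖w m‖ / 2 ^ (i + 1) := by rw [pow_succ, div_div]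
    have hdist : ∀ i, dist (u (m + p * i)) (u (m + p * (i + 1))) ≤
        2 * C * ‖w m‖ / 2 / 2 ^ i := fun i => by
      rw [dist_comm, dist_eq_norm, mul_add_one, ← add_assoc]
      calc ‖u (m + p * i + p) - u (m + p * i)‖ ≤ C * ‖w (m + p * i)‖ :=
            (hM _ (hm.trans (Nat.le_add_right _ _))).1
        _ ≤ C * (‖w m‖ / 2 ^ i) := by
            gcongr
            exact hw i
        _ = 2 * C * ‖w m‖ / 2 / 2 ^ i := by ring
    rw [← dist_eq_norm]
    exact dist_le_of_le_geometric_two_of_tendsto₀ hdist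
      (cauchySeq_of_le_geometric_two hdist).tendsto_limUnder

end AsymptoticComparison

section Diophantine

open Asymptotics Topology

theorem one_le_abs_mul_sub {p q r s : ℤ} (h : p * s ≠ r * q) (δ : ℝ) :
    1 ≤ |(s : ℝ)| * |q * δ - p| + |(q : ℝ)| * |s * δ - r| := by
  calc (1 : ℝ) ≤ |((p * s - r * q : ℤ) : ℝ)| := by
        exact_mod_cast Int.one_le_abs (sub_ne_zero.2 h)
    _ = |q * (s * δ - r) - s * (q * δ - p)| := by
        push_cast
        ring_nf
    _ ≤ |q * (s * δ - r)| + |s * (q * δ - p)| := abs_sub _ _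
    _ = |(s : ℝ)| * |q * δ - p| + |(q : ℝ)| * |s * δ - r| := by rw [abs_mul, abs_mul, add_comm]

theorem irrational_of_tendsto_mul_sub {ι : Type*} {l : Filter ι} {δ : ℝ} {a y : ι → ℤ}
    (h : Tendsto (fun i => a i * δ - y i) l (𝓝 0)) (h₀ : ∃ᶠ i in l, a i * δ - y i ≠ 0) :
    Irrational δ := by
  rw [irrational_iff_ne_rational]
  rintro p q hq rfl
  have hq' : (q : ℝ) ≠ 0 := Int.cast_ne_zero.2 hq
  have hsmall : ∀ᶠ i in l, |(q : ℝ)| * |a i * (p / q : ℝ) - y i| < 1 := by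
    have := (h.abs.const_mul |(q : ℝ)|)
    rw [abs_zero, mul_zero] at this
    exact this.eventually_lt_const one_pos
  obtain ⟨i, hi, hlt⟩ := (h₀.and_eventually hsmall).exists
  have hne : p * a i ≠ y i * q := fun heq => hi <| by
    have : (p * a i : ℝ) = y i * q := mod_cast heq
    field_simp
    linarith
  have := one_le_abs_mul_sub hne (p / q)
  rw [mul_div_cancel₀ _ hq', sub_self, abs_zero, mul_zero, zero_add] at this
  exact hlt.not_ge this

variable {δ : ℝ} {a y : ℕ → ℤ}

theorem eventually_mul_ne_mul {d : ℕ} (hd : d ≠ 0) (ha : ∀ n, a n ≠ 0)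
    (hgcd : ∀ n, Int.gcd (a n) (y n) ∣ d)
    (hgrow : (fun n => (a n : ℝ)) =o[atTop] fun n => (a (n + 1) : ℝ)) :
    ∀ᶠ n in atTop, y n * a (n + 1) ≠ y (n + 1) * a n := by
  have : (0 : ℝ) < d := by positivity
  filter_upwards [hgrow.bound (c := 1 / (2 * d)) (by positivity)] with n hn heq
  have hdvd : a (n + 1) ∣ d * a n :=
    (Int.dvd_gcd_mul_iff_dvd_mul.2 (Dvd.intro_left _ heq)).trans
      (mul_dvd_mul_right (Int.natCast_dvd_natCast.2 (hgcd (n + 1))) _)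
  have hle : |(a (n + 1) : ℝ)| ≤ d * |(a n : ℝ)| := by
    have := Int.le_of_dvd (abs_pos.2 (mul_ne_zero (Int.natCast_ne_zero.2 hd) (ha n)))
      ((abs_dvd_abs _ _).2 hdvd)
    rw [abs_mul, Nat.abs_cast] at this
    exact_mod_cast this
  have hpos : 0 < |(a n : ℝ)| := abs_pos.2 (Int.cast_ne_zero.2 (ha n))
  have : |(a n : ℝ)| ≤ 1 / 2 * |(a n : ℝ)| := by
    calc |(a n : ℝ)| ≤ 1 / (2 * d) * |(a (n + 1) : ℝ)| := hn
      _ ≤ 1 / (2 * d) * (d * |(a n : ℝ)|) := by gcongr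
      _ = 1 / 2 * |(a n : ℝ)| := by field_simp
  linarith

theorem mul_sub_isTheta_inv (ha : ∀ n, a n ≠ 0)
    (hgrow : (fun n => (a n : ℝ)) =o[atTop] fun n => (a (n + 1) : ℝ))
    (happ : (fun n => a n * δ - y n) =O[atTop] fun n => (a (n + 1) : ℝ)⁻¹)
    (hne : ∀ᶠ n in atTop, y n * a (n + 1) ≠ y (n + 1) * a n) :
    (fun n => a n * δ - y n) =Θ[atTop] fun n => (a (n + 1) : ℝ)⁻¹ := by
  have hshift := tendsto_add_atTop_nat 1
  have hsmall : (fun n => a n * (a (n + 1) * δ - y (n + 1))) =o[atTop] fun _ => (1 : ℝ) := by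
    refine (hgrow.trans (hgrow.comp_tendsto hshift)).mul_isBigO (happ.comp_tendsto hshift)
      |>.congr_right fun n => ?_
    exact mul_inv_cancel₀ (Int.cast_ne_zero.2 (ha (n + 1 + 1)))
  refine ⟨happ, IsBigO.of_bound 2 ?_⟩
  filter_upwards [hne, hsmall.bound (c := 1 / 2) (by norm_num)] with n hn hle
  have hone := one_le_abs_mul_sub hn δ
  rw [Real.norm_eq_abs, abs_mul, norm_one, mul_one] at hle
  have hpos : 0 < |(a (n + 1) : ℝ)| := abs_pos.2 (Int.cast_ne_zero.2 (ha (n + 1)))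
  rw [norm_inv, Real.norm_eq_abs, Real.norm_eq_abs, inv_le_iff_one_le_mul₀' hpos]
  linarith

theorem irrational_of_isTheta_inv (ha : ∀ n, a n ≠ 0)
    (hatop : Tendsto (fun n => |(a n : ℝ)|) atTop atTop)
    (h : (fun n => a n * δ - y n) =Θ[atTop] fun n => (a (n + 1) : ℝ)⁻¹) : Irrational δ := by
  have hinv : Tendsto (fun n => (a (n + 1) : ℝ)⁻¹) atTop (𝓝 0) :=
    tendsto_inv₀_cobounded.comp <| tendsto_norm_atTop_iff_cobounded.1 <|
      hatop.comp (tendsto_add_atTop_nat 1)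
  refine irrational_of_tendsto_mul_sub (h.1.trans_tendsto hinv) (Eventually.frequently ?_)
  filter_upwards [h.eq_zero_iff] with n hn
  exact hn.not.2 (inv_ne_zero (Int.cast_ne_zero.2 (ha (n + 1))))

theorem eventually_exists_convs_eq_div (ha : ∀ n, a n ≠ 0)
    (hgrow : (fun n => (a n : ℝ)) =o[atTop] fun n => (a (n + 1) : ℝ))
    (happ : (fun n => a n * δ - y n) =O[atTop] fun n => (a (n + 1) : ℝ)⁻¹) :
    ∀ᶠ n in atTop, ∃ m, (GenContFract.of δ).convs m = y n / a n := by
  have hsmall : (fun n => a n * (a n * δ - y n)) =o[atTop] fun _ => (1 : ℝ) :=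
    (hgrow.mul_isBigO happ).congr_right fun n => mul_inv_cancel₀ (Int.cast_ne_zero.2 (ha (n + 1)))
  filter_upwards [hsmall.bound (c := 1 / 4) (by norm_num)] with n hn
  have hpos : 0 < |(a n : ℝ)| := abs_pos.2 (Int.cast_ne_zero.2 (ha n))
  rw [Real.norm_eq_abs, abs_mul, norm_one] at hn
  refine exists_convs_eq_div (ha n) ?_
  rw [lt_div_iff₀ (by positivity)]
  linarith

theorem exists_forall_exists_le_mul_and_mul_le_succ {b : ℕ → ℝ} (hb : Tendsto b atTop atTop)
    (C : ℝ) : ∃ M > 0, ∀ t ≥ 1, ∃ n, b n ≤ M * t ∧ C * t ≤ b (n + 1) := by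
  set M := max 1 (max (b 0) C)
  have hM : 0 < M := lt_max_of_lt_left one_pos
  refine ⟨M, hM, fun t ht => ?_⟩
  have hex : ∃ n, C * t ≤ b (n + 1) :=
    (((tendsto_add_atTop_iff_nat 1).2 hb).eventually_ge_atTop (C * t)).exists
  obtain ⟨n, hn, hmin⟩ := Nat.findX hex
  refine ⟨n, ?_, hn⟩
  cases n with
  | zero =>
    calc b 0 ≤ M := (le_max_left _ _).trans (le_max_right _ _)
      _ ≤ M * t := le_mul_of_one_le_right hM.le ht
  | succ m =>
    calc b (m + 1) ≤ C * t := (not_le.1 (hmin m m.lt_succ_self)).le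
      _ ≤ M * t := by
        gcongr
        exact (le_max_right _ _).trans (le_max_right _ _)

theorem exists_forall_div_le_abs_mul_sub (ha : ∀ n, a n ≠ 0)
    (hatop : Tendsto (fun n => |(a n : ℝ)|) atTop atTop)
    (happ : (fun n => a n * δ - y n) =O[atTop] fun n => (a (n + 1) : ℝ)⁻¹) :
    ∃ c > 0, ∀ (p : ℤ) (q : ℕ), 0 < q → (∀ n, (p / q : ℚ) ≠ y n / a n) → c / q ≤ |q * δ - p| := by
  obtain ⟨A, hA⟩ := (isBigO_nat_atTop_iff fun n h =>
    absurd h (inv_ne_zero (Int.cast_ne_zero.2 (ha (n + 1))))).1 happ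
  obtain ⟨M, hM, hindex⟩ := exists_forall_exists_le_mul_and_mul_le_succ hatop (2 * A)
  refine ⟨1 / (2 * M), by positivity, fun p q hq hne => ?_⟩
  obtain ⟨n, haq, hn⟩ := hindex q (Nat.one_le_cast.2 hq)
  have hhalf : |(q : ℝ)| * |a n * δ - y n| ≤ 1 / 2 := by
    calc |(q : ℝ)| * |a n * δ - y n| ≤ q * (A * |(a (n + 1) : ℝ)|⁻¹) := by
          rw [Nat.abs_cast, ← abs_inv]
          gcongr
          exact hA n
      _ = 2 * A * q / |(a (n + 1) : ℝ)| / 2 := by ring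
      _ ≤ 1 / 2 := by
          gcongr
          exact div_le_one_of_le₀ hn (abs_nonneg _)
  have hone : 1 ≤ |(a n : ℝ)| * |q * δ - p| + |(q : ℝ)| * |a n * δ - y n| := by
    have hcross : p * a n ≠ y n * q := by
      have := hne n
      rw [Ne, div_eq_div_iff (Nat.cast_ne_zero.2 hq.ne') (Int.cast_ne_zero.2 (ha n))] at this
      exact_mod_cast this
    exact_mod_cast one_le_abs_mul_sub hcross δ
  have : 1 / 2 ≤ M * q * |q * δ - p| := by
    calc (1 / 2 : ℝ) ≤ |(a n : ℝ)| * |q * δ - p| := by linarith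
      _ ≤ M * q * |q * δ - p| := by gcongr
  rw [div_le_iff₀ (by positivity), div_le_iff₀ (by positivity)]
  linarith

end Diophantine

section DistInt

open Asymptotics

theorem distInt_eq_norm (u : ℝ) : distInt u = ‖(u : UnitAddCircle)‖ :=
  UnitAddCircle.norm_eq.symm

theorem abs_distInt_sub_le (u v : ℝ) : |distInt u - distInt v| ≤ |u - v| := by
  rw [distInt_eq_norm, distInt_eq_norm]
  calc _ ≤ ‖(u : UnitAddCircle) - v‖ := abs_norm_sub_norm_le _ _
    _ = distInt (u - v) := by rw [distInt_eq_norm, AddCircle.coe_sub]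
    _ ≤ |u - v - (0 : ℤ)| := round_le _ 0
    _ = |u - v| := by rw [Int.cast_zero, sub_zero]

theorem abs_distInt_sub_le_abs_add_sub (u v : ℝ) (n : ℤ) :
    |distInt u - distInt v| ≤ |u + v - n| := by
  rw [distInt_eq_norm, distInt_eq_norm, ← norm_neg (v : UnitAddCircle)]
  calc _ ≤ ‖(u : UnitAddCircle) - -v‖ := abs_norm_sub_norm_le _ _
    _ = distInt (u + v) := by rw [distInt_eq_norm, AddCircle.coe_add, sub_neg_eq_add]
    _ ≤ |u + v - n| := round_le _ n

theorem exists_int_abs_mul_sub_le (a N : ℤ) (u δ : ℝ) :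
    ∃ y : ℤ, Int.gcd a y = Int.gcd a N ∧
      |a * δ - y| ≤ |a * u - N| + |(a : ℝ)| * |distInt u - δ| := by
  have main : ∀ y : ℤ, |a * distInt u - y| = |a * u - N| →
      |a * δ - y| ≤ |a * u - N| + |(a : ℝ)| * |distInt u - δ| := fun y hy => by
    calc |a * δ - y| = |(a * distInt u - y) - a * (distInt u - δ)| := by ring_nf
      _ ≤ |a * distInt u - y| + |a * (distInt u - δ)| := abs_sub _ _
      _ = _ := by rw [hy, abs_mul]
  rcases abs_choice (u - round u) with h | h
  · refine ⟨N - round u * a, Int.gcd_sub_mul_right_right .., main _ ?_⟩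
    rw [distInt, h]
    push_cast
    ring_nf
  · refine ⟨-(N - round u * a), ?_, main _ ?_⟩
    · rw [Int.gcd_neg, Int.gcd_sub_mul_right_right]
    rw [distInt, h, ← abs_neg]
    push_cast
    ring_nf

theorem exists_int_seq_mul_sub_isBigO {α F : Type*} [Norm F] {l : Filter α} {a N : α → ℤ}
    {u δ : α → ℝ} {w : α → F} (hN : (fun k => a k * u k - N k) =O[l] w)
    (hδ : (fun k => a k * (distInt (u k) - δ k)) =O[l] w) :
    ∃ y : α → ℤ, (∀ k, Int.gcd (a k) (y k) = Int.gcd (a k) (N k)) ∧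
      (fun k => a k * δ k - y k) =O[l] w := by
  choose y hgcd hy using fun k => exists_int_abs_mul_sub_le (a k) (N k) (u k) (δ k)
  obtain ⟨C, hC⟩ := hN.bound
  obtain ⟨D, hD⟩ := hδ.bound
  refine ⟨y, hgcd, IsBigO.of_bound (C + D) ?_⟩
  filter_upwards [hC, hD] with k hk₁ hk₂
  rw [Real.norm_eq_abs] at hk₁ hk₂
  rw [abs_mul] at hk₂
  rw [add_mul]
  exact (hy k).trans (add_le_add hk₁ hk₂)

end DistInt

section SymmetricMatrices

/-- The polarization `tr (adj A * B)` of the determinant on symmetric `2 × 2` matrices. -/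
def detPairing (A B : Matrix (Fin 2) (Fin 2) ℤ) : ℤ :=
  A 0 0 * B 1 1 - 2 * (A 0 1 * B 0 1) + A 1 1 * B 0 0

/-- If `ξ` multiplies the first row of `B` approximately to its second row and the integer
`detPairing A B` approximately to `s`, then this is the integer near `A 0 0 * B 1 1 * ξ`. -/
def nearInt (A B : Matrix (Fin 2) (Fin 2) ℤ) (s : ℤ) : ℤ :=
  2 * (A 0 1 * B 1 1) - A 1 1 * B 0 1 + s

theorem mul_sub_nearInt (A B : Matrix (Fin 2) (Fin 2) ℤ) (s : ℤ) (ξ : ℝ) :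
    A 0 0 * (B 1 1 * ξ) - nearInt A B s =
      2 * (A 0 1 * (B 0 1 * ξ - B 1 1)) - A 1 1 * (B 0 0 * ξ - B 0 1) +
        (detPairing A B * ξ - s) := by
  simp only [nearInt, detPairing]
  push_cast
  ring

theorem gcd_nearInt_dvd_two {A B : Matrix (Fin 2) (Fin 2) ℤ} {s : ℤ}
    (hA : A 0 0 * A 1 1 - A 0 1 * A 0 1 = 1) (hB : B 0 0 * B 1 1 - B 0 1 * B 0 1 = 1)
    (h : A 0 0 ∣ s * B 0 0 - detPairing A B * B 0 1) :
    Int.gcd (A 0 0) (nearInt A B s) ∣ 2 := by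
  set g : ℤ := ↑(Int.gcd (A 0 0) (nearInt A B s))
  have hg : g ∣ A 0 0 := Int.gcd_dvd_left ..
  have h2b : g ∣ 2 * A 0 1 := by
    have key : 2 * A 0 1 = B 0 0 * nearInt A B s - A 0 0 * (B 0 1 * B 1 1) -
        (s * B 0 0 - detPairing A B * B 0 1) := by
      simp only [nearInt, detPairing]
      linear_combination -2 * A 0 1 * hB
    rw [key]
    exact dvd_sub (dvd_sub ((Int.gcd_dvd_right ..).mul_left _) (hg.mul_right _)) (hg.trans h)
  have key : ((2 : ℕ) : ℤ) = 2 * A 1 1 * A 0 0 - A 0 1 * (2 * A 0 1) := by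
    push_cast
    linear_combination -2 * hA
  exact Int.natCast_dvd_natCast.1 (key ▸ dvd_sub (hg.mul_left _) (h2b.mul_left _))

theorem entries_of_adjugate_mul_eq {A B S : Matrix (Fin 2) (Fin 2) ℤ} {k : ℕ}
    (hA : A 0 1 = A 1 0) (hB : B 0 1 = B 1 0) (hS : S 0 1 = S 1 0)
    (h : A.adjugate * B = Mmat k * S) :
    (A 1 1 * B 0 0 - A 0 1 * B 0 1 = 3 * S 0 0 + (-1) ^ k * S 0 1 ∧
      A 1 1 * B 0 1 - A 0 1 * B 1 1 = 3 * S 0 1 + (-1) ^ k * S 1 1) ∧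
    A 0 0 * B 0 1 - A 0 1 * B 0 0 = -(-1) ^ k * S 0 0 ∧
      A 0 0 * B 1 1 - A 0 1 * B 0 1 = -(-1) ^ k * S 0 1 := by
  have entry (i j : Fin 2) : (A.adjugate * B) i j = (Mmat k * S) i j := by rw [h]
  simp only [Matrix.adjugate_fin_two, Matrix.mul_apply, Fin.sum_univ_two, Fin.forall_fin_two,
    Mmat, Matrix.of_apply, Matrix.cons_val', Matrix.cons_val_zero, Matrix.cons_val_one,
    Matrix.cons_val_fin_one, ← hA, ← hB, ← hS, pow_succ] at entry
  refine ⟨⟨?_, ?_⟩, ?_, ?_⟩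
  · linear_combination entry.1.1
  · linear_combination entry.1.2
  · linear_combination entry.2.1
  · linear_combination entry.2.2

theorem mul_mul_self_of_det_eq_one {R : Type*} [CommRing R] {P : Matrix (Fin 2) (Fin 2) R}
    (A : Matrix (Fin 2) (Fin 2) R) (hP : P.det = 1) :
    A * P * P = P.trace • (A * P) - A := by
  have h := P.aeval_self_charpoly
  nontriviality R
  rw [Matrix.charpoly_fin_two, hP] at h
  simp only [map_add, map_sub, map_mul, map_pow, Polynomial.aeval_X, Polynomial.aeval_C, map_one,
    ← Algebra.smul_def] at h
  have hsq : P * P = P.trace • P - 1 := by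
    rw [← sq, ← sub_eq_zero, ← h]
    abel
  rw [mul_assoc, hsq, mul_sub, mul_smul_comm, mul_one]

end SymmetricMatrices

theorem neg_one_pow_mul_self (k : ℕ) : ((-1) ^ k * (-1) ^ k : ℤ) = 1 := by
  rw [← mul_pow, neg_one_mul, neg_neg, one_pow]

theorem det_Mmat (k : ℕ) : (Mmat k).det = 1 := by
  rw [Mmat, Matrix.det_fin_two_of, pow_succ]
  linear_combination neg_one_pow_mul_self k

theorem Mmat_add_two (k : ℕ) : Mmat (k + 2) = Mmat k := by
  simp only [Mmat, pow_succ, mul_neg_one, neg_neg]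

namespace MarkoffSeq

section Identities

variable {ξ : ℝ} {x : ℕ → Matrix (Fin 2) (Fin 2) ℤ} {k : ℕ}

theorem det_eq_one (hx : MarkoffSeq ξ x) (hk : 1 ≤ k) : (x k).det = 1 :=
  hx.2.1 k hk

theorem symm (hx : MarkoffSeq ξ x) (hk : 1 ≤ k) : x k 0 1 = x k 1 0 :=
  hx.1 k hk

theorem mul_sub_mul_self (hx : MarkoffSeq ξ x) (hk : 1 ≤ k) :
    x k 0 0 * x k 1 1 - x k 0 1 * x k 0 1 = 1 := by
  rw [← hx.det_eq_one hk, Matrix.det_fin_two, ← hx.symm hk]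

theorem add_two_eq (hx : MarkoffSeq ξ x) (hk : 1 ≤ k) : x (k + 2) = x k * Mmat k * x (k + 1) := by
  obtain ⟨-, -, c₁, c₂, c₃, -, -, -, h⟩ := hx
  exact (h k hk).2.2.1.2

theorem add_two_eq' (hx : MarkoffSeq ξ x) (hk : 1 ≤ k) :
    x (k + 2) = x (k + 1) * Mmat (k + 1) * x k := by
  obtain ⟨-, -, c₁, c₂, c₃, -, -, -, h⟩ := hx
  exact (h k hk).2.2.1.1

theorem adjugate_mul_add_two (hx : MarkoffSeq ξ x) (hk : 1 ≤ k) :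
    (x k).adjugate * x (k + 2) = Mmat k * x (k + 1) := by
  rw [hx.add_two_eq hk, ← mul_assoc, ← mul_assoc, Matrix.adjugate_mul, hx.det_eq_one hk, one_smul,
    one_mul]

theorem adjugate_succ_mul_add_two (hx : MarkoffSeq ξ x) (hk : 1 ≤ k) :
    (x (k + 1)).adjugate * x (k + 2) = Mmat (k + 1) * x k := by
  rw [hx.add_two_eq' hk, ← mul_assoc, ← mul_assoc, Matrix.adjugate_mul,
    hx.det_eq_one k.succ_pos, one_smul, one_mul]

theorem trace_Mmat_mul (hx : MarkoffSeq ξ x) (hk : 1 ≤ k) (j : ℕ) :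
    (Mmat j * x k).trace = 3 * x k 0 0 := by
  simp only [Matrix.trace_fin_two, Mmat, Matrix.mul_apply, Fin.sum_univ_two, Matrix.of_apply,
    Matrix.cons_val', Matrix.cons_val_zero, Matrix.cons_val_one, Matrix.cons_val_fin_one,
    hx.symm hk, pow_succ]
  ring

theorem add_three_eq (hx : MarkoffSeq ξ x) (hk : 1 ≤ k) :
    x (k + 3) = (3 * x (k + 1) 0 0) • x (k + 2) - x k := by
  have hk' : 1 ≤ k + 1 := k.succ_pos
  have hdet : (Mmat k * x (k + 1)).det = 1 := by
    rw [Matrix.det_mul, det_Mmat, hx.det_eq_one hk', one_mul]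
  calc x (k + 3) = x k * (Mmat k * x (k + 1)) * (Mmat k * x (k + 1)) := by
        rw [hx.add_two_eq' hk', add_assoc, Mmat_add_two, hx.add_two_eq hk]
        simp only [mul_assoc]
    _ = (3 * x (k + 1) 0 0) • x (k + 2) - x k := by
        rw [mul_mul_self_of_det_eq_one _ hdet, hx.trace_Mmat_mul hk', hx.add_two_eq hk, mul_assoc]

theorem entry_add_three (hx : MarkoffSeq ξ x) (hk : 1 ≤ k) (i j : Fin 2) :
    x (k + 3) i j = 3 * x (k + 1) 0 0 * x (k + 2) i j - x k i j := by
  rw [hx.add_three_eq hk, Matrix.sub_apply, Matrix.smul_apply, smul_eq_mul]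

theorem entries_add_two (hx : MarkoffSeq ξ x) (hk : 1 ≤ k) :
    (x k 1 1 * x (k + 2) 0 0 - x k 0 1 * x (k + 2) 0 1 =
        3 * x (k + 1) 0 0 + (-1) ^ k * x (k + 1) 0 1 ∧
      x k 1 1 * x (k + 2) 0 1 - x k 0 1 * x (k + 2) 1 1 =
        3 * x (k + 1) 0 1 + (-1) ^ k * x (k + 1) 1 1) ∧
    x k 0 0 * x (k + 2) 0 1 - x k 0 1 * x (k + 2) 0 0 = -(-1) ^ k * x (k + 1) 0 0 ∧
      x k 0 0 * x (k + 2) 1 1 - x k 0 1 * x (k + 2) 0 1 = -(-1) ^ k * x (k + 1) 0 1 :=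
  entries_of_adjugate_mul_eq (hx.symm hk) (hx.symm (by lia)) (hx.symm (by lia))
    (hx.adjugate_mul_add_two hk)

theorem entries_succ_add_two (hx : MarkoffSeq ξ x) (hk : 1 ≤ k) :
    (x (k + 1) 1 1 * x (k + 2) 0 0 - x (k + 1) 0 1 * x (k + 2) 0 1 =
        3 * x k 0 0 + (-1) ^ (k + 1) * x k 0 1 ∧
      x (k + 1) 1 1 * x (k + 2) 0 1 - x (k + 1) 0 1 * x (k + 2) 1 1 =
        3 * x k 0 1 + (-1) ^ (k + 1) * x k 1 1) ∧
    x (k + 1) 0 0 * x (k + 2) 0 1 - x (k + 1) 0 1 * x (k + 2) 0 0 = -(-1) ^ (k + 1) * x k 0 0 ∧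
      x (k + 1) 0 0 * x (k + 2) 1 1 - x (k + 1) 0 1 * x (k + 2) 0 1 = -(-1) ^ (k + 1) * x k 0 1 :=
  entries_of_adjugate_mul_eq (hx.symm (by lia)) (hx.symm (by lia)) (hx.symm hk)
    (hx.adjugate_succ_mul_add_two hk)

theorem detPairing_add_two (hx : MarkoffSeq ξ x) (hk : 1 ≤ k) :
    detPairing (x k) (x (k + 2)) = 3 * x (k + 1) 0 0 := by
  obtain ⟨⟨h₀, -⟩, -, h₁⟩ := hx.entries_add_two hk
  rw [detPairing]
  linear_combination h₀ + h₁

theorem detPairing_succ_add_two (hx : MarkoffSeq ξ x) (hk : 1 ≤ k) :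
    detPairing (x (k + 1)) (x (k + 2)) = 3 * x k 0 0 := by
  obtain ⟨⟨h₀, -⟩, -, h₁⟩ := hx.entries_succ_add_two hk
  rw [detPairing]
  linear_combination h₀ + h₁

theorem detPairing_succ (hx : MarkoffSeq ξ x) (hk : 1 ≤ k) :
    detPairing (x k) (x (k + 1)) = 9 * (x k 0 0 * x (k + 1) 0 0) - 3 * x (k + 2) 0 0 := by
  have hdet := hx.mul_sub_mul_self hk
  obtain ⟨⟨h₀₀, h₀₁⟩, h₁₀, h₁₁⟩ := hx.entries_add_two hk
  have he := neg_one_pow_mul_self k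
  have hsymm : (-1) ^ k * detPairing (x k) (x (k + 1)) =
      3 * (x k 0 1 * x (k + 1) 0 0 - x k 0 0 * x (k + 1) 0 1) := by
    rw [detPairing]
    linear_combination x k 0 1 * h₀₀ + x k 1 1 * h₁₀ - x k 0 0 * h₀₁ - x k 0 1 * h₁₁
  have hcorner : x (k + 2) 0 0 = 3 * (x k 0 0 * x (k + 1) 0 0) +
      (-1) ^ k * (x k 0 0 * x (k + 1) 0 1 - x k 0 1 * x (k + 1) 0 0) := by
    linear_combination x k 0 0 * h₀₀ + x k 0 1 * h₁₀ - x (k + 2) 0 0 * hdet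
  linear_combination (-1) ^ k * hsymm - detPairing (x k) (x (k + 1)) * he + 3 * hcorner

theorem detPairing_add_four (hx : MarkoffSeq ξ x) (hk : 1 ≤ k) :
    detPairing (x k) (x (k + 4)) =
      9 * (x (k + 1) 0 0 * x (k + 3) 0 0) - 3 * x (k + 2) 0 0 := by
  have hk' : 1 ≤ k + 1 := k.succ_pos
  have h₁ := hx.detPairing_succ hk
  have h₂ := hx.detPairing_add_two hk
  rw [detPairing] at h₁ h₂ ⊢
  simp only [hx.entry_add_three hk', hx.entry_add_three hk]
  linear_combination 9 * x (k + 1) 0 0 * x (k + 2) 0 0 * h₂ - h₁ -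
    6 * x (k + 2) 0 0 * hx.mul_sub_mul_self hk

theorem gcd_nearInt_add_two_dvd_two (hx : MarkoffSeq ξ x) (hk : 1 ≤ k) :
    Int.gcd (x k 0 0) (nearInt (x k) (x (k + 2)) (3 * x (k + 1) 0 1)) ∣ 2 := by
  refine gcd_nearInt_dvd_two (hx.mul_sub_mul_self hk) (hx.mul_sub_mul_self (by lia))
    ⟨3 * (-1) ^ (k + 1), ?_⟩
  rw [hx.detPairing_add_two hk]
  linear_combination -3 * (hx.entries_succ_add_two hk).2.1

theorem gcd_nearInt_succ_dvd_two (hx : MarkoffSeq ξ x) (hk : 1 ≤ k) :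
    Int.gcd (x k 0 0)
      (nearInt (x k) (x (k + 1)) (9 * (x k 0 0 * x (k + 1) 0 1) - 3 * x (k + 2) 0 1)) ∣ 2 := by
  refine gcd_nearInt_dvd_two (hx.mul_sub_mul_self hk) (hx.mul_sub_mul_self (by lia))
    ⟨3 * (-1) ^ (k + 1), ?_⟩
  rw [hx.detPairing_succ hk]
  linear_combination -3 * (hx.entries_succ_add_two hk).2.1

theorem nearInt_add_four_add_nearInt_succ (hx : MarkoffSeq ξ x) (hk : 1 ≤ k) :
    nearInt (x k) (x (k + 4)) (9 * (x (k + 1) 0 0 * x (k + 3) 0 1) - 3 * x (k + 2) 0 1) +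
        nearInt (x k) (x (k + 1)) (9 * (x k 0 0 * x (k + 1) 0 1) - 3 * x (k + 2) 0 1) =
      3 * x k 0 0 * nearInt (x (k + 2)) (x (k + 3)) (3 * x (k + 1) 0 1) := by
  have hk' : 1 ≤ k + 1 := k.succ_pos
  obtain ⟨⟨h₀₀, -⟩, h₁₀, h₁₁⟩ := hx.entries_add_two hk
  obtain ⟨-, -, h₁₁'⟩ := hx.entries_add_two hk'
  have he := neg_one_pow_mul_self k
  simp only [nearInt, hx.entry_add_three hk']
  linear_combination -6 * x (k + 3) 1 1 * h₁₀ - 3 * x (k + 3) 0 1 * (h₀₀ - h₁₁) +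
    6 * (-1) ^ k * h₁₁' + 6 * x (k + 2) 0 1 * he

theorem gcd_nearInt_add_four_dvd_two (hx : MarkoffSeq ξ x) (hk : 1 ≤ k) :
    Int.gcd (x k 0 0) (nearInt (x k) (x (k + 4))
      (9 * (x (k + 1) 0 0 * x (k + 3) 0 1) - 3 * x (k + 2) 0 1)) ∣ 2 := by
  rw [eq_sub_of_add_eq (hx.nearInt_add_four_add_nearInt_succ hk), mul_comm 3, mul_assoc,
    Int.gcd_mul_left_sub_right]
  exact hx.gcd_nearInt_succ_dvd_two hk

end Identities

end MarkoffSeq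

namespace MarkoffSeq

section Asymptotics

open Asymptotics Topology

variable {ξ : ℝ} {x : ℕ → Matrix (Fin 2) (Fin 2) ℤ}

theorem Xnorm_lt_mul_abs (hx : MarkoffSeq ξ x) {k : ℕ} (hk : 1 ≤ k) :
    Xnorm x k < (1 + ξ ^ 2) * |(x k 0 0 : ℝ)| := by
  obtain ⟨-, -, c₁, c₂, c₃, -, -, -, h⟩ := hx
  exact (h k hk).2.2.2.2

theorem Xnorm_lt_succ (hx : MarkoffSeq ξ x) {k : ℕ} (hk : 1 ≤ k) :
    Xnorm x k < Xnorm x (k + 1) := by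
  obtain ⟨-, -, c₁, c₂, c₃, -, -, -, h⟩ := hx
  exact (h k hk).2.2.2.1

theorem zero_zero_ne_zero (hx : MarkoffSeq ξ x) {k : ℕ} (hk : 1 ≤ k) : x k 0 0 ≠ 0 := fun h => by
  have hlt := hx.Xnorm_lt_mul_abs hk
  rw [h, Int.cast_zero, abs_zero, mul_zero] at hlt
  exact hlt.not_ge ((abs_nonneg _).trans (le_max_left _ _))

theorem one_le_Xnorm (hx : MarkoffSeq ξ x) {k : ℕ} (hk : 1 ≤ k) : 1 ≤ Xnorm x k := by
  have : (1 : ℝ) ≤ |(x k 0 0 : ℝ)| := by exact_mod_cast Int.one_le_abs (hx.zero_zero_ne_zero hk)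
  exact this.trans (le_max_left _ _)

theorem Xnorm_pos (hx : MarkoffSeq ξ x) {k : ℕ} (hk : 1 ≤ k) : 0 < Xnorm x k :=
  one_pos.trans_le (hx.one_le_Xnorm hk)

theorem Xnorm_le_Xnorm (hx : MarkoffSeq ξ x) {j k : ℕ} (hj : 1 ≤ j) (hjk : j ≤ k) :
    Xnorm x j ≤ Xnorm x k := by
  induction k, hjk using Nat.le_induction with
  | base => exact le_rfl
  | succ k hk ih => exact ih.trans (hx.Xnorm_lt_succ (hj.trans hk)).le

theorem entry_isBigO (hx : MarkoffSeq ξ x) (i j : Fin 2) :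
    (fun k => (x k i j : ℝ)) =O[atTop] Xnorm x := by
  refine IsBigO.of_bound 1 ?_
  filter_upwards [eventually_ge_atTop 1] with k hk
  have hX : ∀ r ≤ Xnorm x k, r ≤ 1 * ‖Xnorm x k‖ := fun r hr => by
    rw [one_mul]
    exact hr.trans (le_abs_self _)
  refine hX _ ?_
  have h₀₁ : |(x k 0 1 : ℝ)| ≤ Xnorm x k := (le_max_left _ _).trans (le_max_right _ _)
  fin_cases i <;> fin_cases j
  · exact le_max_left _ _
  · exact h₀₁
  · exact (hx.symm hk) ▸ h₀₁
  · exact (le_max_right _ _).trans (le_max_right _ _)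

theorem zero_zero_isTheta (hx : MarkoffSeq ξ x) :
    (fun k => (x k 0 0 : ℝ)) =Θ[atTop] Xnorm x := by
  refine ⟨hx.entry_isBigO 0 0, IsBigO.of_bound (1 + ξ ^ 2) ?_⟩
  filter_upwards [eventually_ge_atTop 1] with k hk
  rw [Real.norm_of_nonneg (hx.Xnorm_pos hk).le]
  exact (hx.Xnorm_lt_mul_abs hk).le

theorem entry_mul_sub_isBigO (hx : MarkoffSeq ξ x) (i : Fin 2) :
    (fun k => x k 0 i * ξ - x k i 1) =O[atTop] fun k => (Xnorm x k)⁻¹ := by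
  have ⟨_, _, _, _, c₃, _, _, _, h⟩ := hx
  refine IsBigO.of_bound c₃ ?_
  filter_upwards [eventually_ge_atTop 1] with k hk
  rw [norm_inv, Real.norm_of_nonneg (hx.Xnorm_pos hk).le, ← div_eq_mul_inv]
  fin_cases i
  · exact (h k hk).2.1.1
  · exact (h k hk).2.1.2

theorem Xnorm_mul_Xnorm_succ_le (hx : MarkoffSeq ξ x) {k : ℕ} (hk : 1 ≤ k) :
    Xnorm x (k + 1) * Xnorm x (k + 2) ≤ (1 + ξ ^ 2) ^ 2 * Xnorm x (k + 3) := by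
  have hX : 0 < Xnorm x (k + 2) := hx.Xnorm_pos (by lia)
  have hrec : (3 * x (k + 1) 0 0 * x (k + 2) 0 0 : ℝ) = x (k + 3) 0 0 + x k 0 0 := by
    exact_mod_cast eq_add_of_sub_eq (hx.entry_add_three hk 0 0).symm
  have hprod : 3 * (|(x (k + 1) 0 0 : ℝ)| * |(x (k + 2) 0 0 : ℝ)|) ≤ 2 * Xnorm x (k + 3) := by
    calc 3 * (|(x (k + 1) 0 0 : ℝ)| * |(x (k + 2) 0 0 : ℝ)|)
        = |(x (k + 3) 0 0 + x k 0 0 : ℝ)| := by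
          rw [← hrec, abs_mul, abs_mul, abs_of_pos (three_pos : (0 : ℝ) < 3), mul_assoc]
      _ ≤ |(x (k + 3) 0 0 : ℝ)| + |(x k 0 0 : ℝ)| := abs_add_le _ _
      _ ≤ Xnorm x (k + 3) + Xnorm x (k + 3) :=
          add_le_add (le_max_left _ _)
            ((le_max_left _ _).trans (hx.Xnorm_le_Xnorm hk (Nat.le_add_right k 3)))
      _ = 2 * Xnorm x (k + 3) := (two_mul _).symm
  calc Xnorm x (k + 1) * Xnorm x (k + 2)
      ≤ (1 + ξ ^ 2) * |(x (k + 1) 0 0 : ℝ)| * ((1 + ξ ^ 2) * |(x (k + 2) 0 0 : ℝ)|) := by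
        gcongr
        · exact (hx.Xnorm_lt_mul_abs (by lia)).le
        · exact (hx.Xnorm_lt_mul_abs (by lia)).le
    _ = (1 + ξ ^ 2) ^ 2 * (|(x (k + 1) 0 0 : ℝ)| * |(x (k + 2) 0 0 : ℝ)|) := by ring
    _ ≤ (1 + ξ ^ 2) ^ 2 * Xnorm x (k + 3) := by
        have := hx.Xnorm_pos (k := k + 3) (by lia)
        gcongr
        linarith

theorem Xnorm_mul_Xnorm_le (hx : MarkoffSeq ξ x) {i r j : ℕ} (hi : 2 ≤ i) (hir : i < r)
    (hrj : r < j) : Xnorm x i * Xnorm x r ≤ (1 + ξ ^ 2) ^ 2 * Xnorm x j := by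
  obtain ⟨k, rfl⟩ : ∃ k, r = k + 2 := ⟨r - 2, by lia⟩
  have := hx.Xnorm_pos (k := k + 2) (by lia)
  calc Xnorm x i * Xnorm x (k + 2) ≤ Xnorm x (k + 1) * Xnorm x (k + 2) := by
        gcongr
        exact hx.Xnorm_le_Xnorm (by lia) (by lia)
    _ ≤ (1 + ξ ^ 2) ^ 2 * Xnorm x (k + 3) := hx.Xnorm_mul_Xnorm_succ_le (by lia)
    _ ≤ (1 + ξ ^ 2) ^ 2 * Xnorm x j := by
        gcongr
        exact hx.Xnorm_le_Xnorm (by lia) (by lia)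

theorem mul_inv_isBigO_inv (hx : MarkoffSeq ξ x) {i r j : ℕ} (hne : i ≠ r) (hij : i < j)
    (hrj : r < j) :
    (fun k => Xnorm x (k + i) * (Xnorm x (k + j))⁻¹) =O[atTop] fun k => (Xnorm x (k + r))⁻¹ := by
  refine IsBigO.of_bound ((1 + ξ ^ 2) ^ 2) ?_
  filter_upwards [eventually_ge_atTop 2] with k hk
  have hXi := hx.Xnorm_pos (k := k + i) (by lia)
  have hXr := hx.Xnorm_pos (k := k + r) (by lia)
  have hXj := hx.Xnorm_pos (k := k + j) (by lia)
  rw [Real.norm_of_nonneg (by positivity), Real.norm_of_nonneg (by positivity),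
    ← div_eq_mul_inv, ← div_eq_mul_inv, div_le_div_iff₀ hXj hXr]
  rcases hne.lt_or_gt with hir | hri
  · exact hx.Xnorm_mul_Xnorm_le (by lia) (by lia) (by lia)
  · rw [mul_comm (Xnorm x (k + i))]
    exact hx.Xnorm_mul_Xnorm_le (by lia) (by lia) (by lia)

theorem tendsto_Xnorm (hx : MarkoffSeq ξ x) : Tendsto (Xnorm x) atTop atTop := by
  have hint (k : ℕ) : Xnorm x k = ((max |x k 0 0| (max |x k 0 1| |x k 1 1|) : ℤ) : ℝ) := by
    rw [Xnorm]
    push_cast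
    rfl
  have hstep (k : ℕ) (hk : 1 ≤ k) : Xnorm x k + 1 ≤ Xnorm x (k + 1) := by
    have := hx.Xnorm_lt_succ hk
    rw [hint, hint] at this ⊢
    exact_mod_cast Int.add_one_le_of_lt (Int.cast_lt.1 this)
  have hle (k : ℕ) : (k : ℝ) ≤ Xnorm x (k + 1) := by
    induction k with
    | zero => exact_mod_cast (hx.Xnorm_pos le_rfl).le
    | succ k ih =>
      push_cast
      exact (add_le_add_left ih 1).trans (hstep (k + 1) k.succ_pos)
  exact (tendsto_add_atTop_iff_nat 1).1 (tendsto_atTop_mono hle tendsto_natCast_atTop_atTop)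

theorem Xnorm_isLittleO_succ (hx : MarkoffSeq ξ x) :
    Xnorm x =o[atTop] fun k => Xnorm x (k + 1) := by
  have h : Tendsto (fun k => Xnorm x (k + 1) * (Xnorm x (k + 2))⁻¹) atTop (𝓝 0) :=
    (hx.mul_inv_isBigO_inv one_ne_zero one_lt_two two_pos).trans_tendsto
      hx.tendsto_Xnorm.inv_tendsto_atTop
  rw [isLittleO_iff_tendsto']
  · exact (tendsto_add_atTop_iff_nat 1).1 h
  · filter_upwards with k hk
    exact absurd hk (hx.Xnorm_pos k.succ_pos).ne'

theorem two_mul_norm_inv_Xnorm_le (hx : MarkoffSeq ξ x) :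
    ∀ᶠ k in atTop, 2 * ‖(Xnorm x (k + 3))⁻¹‖ ≤ ‖(Xnorm x k)⁻¹‖ := by
  filter_upwards [hx.Xnorm_isLittleO_succ.bound (c := 1 / 2) (by norm_num), eventually_ge_atTop 1]
    with k hk hk₁
  have hX := hx.Xnorm_pos hk₁
  have hX₃ := hx.Xnorm_pos (k := k + 3) (by lia)
  rw [Real.norm_of_nonneg hX.le, Real.norm_of_nonneg (hx.Xnorm_pos k.succ_pos).le] at hk
  rw [Real.norm_of_nonneg (by positivity), Real.norm_of_nonneg (by positivity),
    ← div_eq_mul_inv, div_le_iff₀ hX₃, inv_mul_eq_div, le_div_iff₀ hX]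
  linarith [hx.Xnorm_le_Xnorm (j := k + 1) (k := k + 3) (by lia) (by lia)]

theorem entry_mul_isBigO (hx : MarkoffSeq ξ x) {i r j : ℕ} (hne : i ≠ r) (hij : i < j)
    (hrj : r < j) (p q s : Fin 2) :
    (fun k => x (k + i) p q * (x (k + j) 0 s * ξ - x (k + j) s 1)) =O[atTop]
      fun k => (Xnorm x (k + r))⁻¹ :=
  (((hx.entry_isBigO p q).comp_tendsto (tendsto_add_atTop_nat i)).mul
    ((hx.entry_mul_sub_isBigO s).comp_tendsto (tendsto_add_atTop_nat j))).trans
    (hx.mul_inv_isBigO_inv hne hij hrj)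

theorem mul_sub_nearInt_isBigO (hx : MarkoffSeq ξ x) {i r j : ℕ} (hne : i ≠ r) (hij : i < j)
    (hrj : r < j) {s : ℕ → ℤ}
    (hs : (fun k => detPairing (x (k + i)) (x (k + j)) * ξ - s k) =O[atTop]
      fun k => (Xnorm x (k + r))⁻¹) :
    (fun k => x (k + i) 0 0 * (x (k + j) 1 1 * ξ) - nearInt (x (k + i)) (x (k + j)) (s k)) =O[atTop]
      fun k => (Xnorm x (k + r))⁻¹ := by
  simp only [mul_sub_nearInt]
  exact (((hx.entry_mul_isBigO hne hij hrj 0 1 1).const_mul_left 2).sub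
    (hx.entry_mul_isBigO hne hij hrj 1 1 0)).add hs

theorem three_mul_entry_sub_isBigO (hx : MarkoffSeq ξ x) (r : ℕ) :
    (fun k => 3 * (x (k + r) 0 0 * ξ - x (k + r) 0 1)) =O[atTop] fun k => (Xnorm x (k + r))⁻¹ :=
  ((hx.entry_mul_sub_isBigO 0).comp_tendsto (tendsto_add_atTop_nat r)).const_mul_left 3

theorem mul_sub_nearInt_succ_add_two_isBigO (hx : MarkoffSeq ξ x) :
    (fun k => x (k + 1) 0 0 * (x (k + 2) 1 1 * ξ) -
      nearInt (x (k + 1)) (x (k + 2)) (3 * x k 0 1)) =O[atTop] fun k => (Xnorm x k)⁻¹ := by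
  refine hx.mul_sub_nearInt_isBigO (r := 0) one_ne_zero one_lt_two two_pos ?_
  refine (hx.three_mul_entry_sub_isBigO 0).congr' ?_ EventuallyEq.rfl
  filter_upwards [eventually_ge_atTop 1] with k hk
  rw [add_zero, hx.detPairing_succ_add_two hk]
  push_cast
  ring

theorem mul_sub_nearInt_add_two_isBigO (hx : MarkoffSeq ξ x) :
    (fun k => x k 0 0 * (x (k + 2) 1 1 * ξ) -
      nearInt (x k) (x (k + 2)) (3 * x (k + 1) 0 1)) =O[atTop] fun k => (Xnorm x (k + 1))⁻¹ := by
  refine hx.mul_sub_nearInt_isBigO (i := 0) zero_ne_one two_pos one_lt_two ?_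
  refine (hx.three_mul_entry_sub_isBigO 1).congr' ?_ EventuallyEq.rfl
  filter_upwards [eventually_ge_atTop 1] with k hk
  rw [add_zero, hx.detPairing_add_two hk]
  push_cast
  ring

theorem mul_sub_nearInt_add_four_isBigO (hx : MarkoffSeq ξ x) :
    (fun k => x k 0 0 * (x (k + 4) 1 1 * ξ) -
      nearInt (x k) (x (k + 4)) (9 * (x (k + 1) 0 0 * x (k + 3) 0 1) - 3 * x (k + 2) 0 1))
      =O[atTop] fun k => (Xnorm x (k + 2))⁻¹ := by
  refine hx.mul_sub_nearInt_isBigO (i := 0) two_ne_zero.symm four_pos (by norm_num) ?_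
  refine (((hx.entry_mul_isBigO (j := 3) (r := 2) one_lt_two.ne (by norm_num) (by norm_num)
    0 0 0).const_mul_left 9).sub (hx.three_mul_entry_sub_isBigO 2)).congr' ?_ EventuallyEq.rfl
  filter_upwards [eventually_ge_atTop 1] with k hk
  rw [add_zero, hx.detPairing_add_four hk]
  push_cast
  ring

theorem exists_periodic_distInt_sub_isBigO (hx : MarkoffSeq ξ x) :
    ∃ δ : ℕ → ℝ, Function.Periodic δ 3 ∧
      (fun k => distInt (x k 1 1 * ξ) - δ k) =O[atTop] fun k => (Xnorm x k)⁻¹ := by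
  refine exists_periodic_sub_isBigO ?_ hx.two_mul_norm_inv_Xnorm_le
  refine IsBigO.trans (IsBigO.of_norm_eventuallyLE ?_)
    (hx.mul_sub_nearInt_succ_add_two_isBigO.const_mul_left 3).norm_left
  filter_upwards [eventually_ge_atTop 1] with k hk
  refine (abs_distInt_sub_le_abs_add_sub _ _
    (3 * nearInt (x (k + 1)) (x (k + 2)) (3 * x k 0 1))).trans_eq ?_
  rw [Real.norm_eq_abs, hx.entry_add_three hk]
  push_cast
  ring_nf

variable {δ : ℕ → ℝ}

theorem mul_distInt_sub_isBigO (hx : MarkoffSeq ξ x)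
    (hδ : (fun k => distInt (x k 1 1 * ξ) - δ k) =O[atTop] fun k => (Xnorm x k)⁻¹) {r j : ℕ}
    (hr : 0 < r) (hrj : r < j) :
    (fun k => x k 0 0 * (distInt (x (k + j) 1 1 * ξ) - δ (k + j))) =O[atTop]
      fun k => (Xnorm x (k + r))⁻¹ :=
  ((hx.entry_isBigO 0 0).mul (hδ.comp_tendsto (tendsto_add_atTop_nat j))).trans
    (hx.mul_inv_isBigO_inv (i := 0) hr.ne (hr.trans hrj) hrj)

theorem exists_mul_sub_isBigO_succ (hx : MarkoffSeq ξ x)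
    (hδ : (fun k => distInt (x k 1 1 * ξ) - δ k) =O[atTop] fun k => (Xnorm x k)⁻¹) :
    ∃ y : ℕ → ℤ, (∀ k, 1 ≤ k → Int.gcd (x k 0 0) (y k) ∣ 2) ∧
      (fun k => x k 0 0 * δ (k + 2) - y k) =O[atTop] fun k => (Xnorm x (k + 1))⁻¹ := by
  obtain ⟨y, hgcd, hy⟩ := exists_int_seq_mul_sub_isBigO hx.mul_sub_nearInt_add_two_isBigO
    (hx.mul_distInt_sub_isBigO hδ one_pos one_lt_two)
  exact ⟨y, fun k hk => hgcd k ▸ hx.gcd_nearInt_add_two_dvd_two hk, hy⟩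

theorem exists_mul_sub_isBigO_add_two (hx : MarkoffSeq ξ x)
    (hδ : (fun k => distInt (x k 1 1 * ξ) - δ k) =O[atTop] fun k => (Xnorm x k)⁻¹) :
    ∃ y : ℕ → ℤ, (∀ k, 1 ≤ k → Int.gcd (x k 0 0) (y k) ∣ 2) ∧
      (fun k => x k 0 0 * δ (k + 4) - y k) =O[atTop] fun k => (Xnorm x (k + 2))⁻¹ := by
  obtain ⟨y, hgcd, hy⟩ := exists_int_seq_mul_sub_isBigO hx.mul_sub_nearInt_add_four_isBigO
    (hx.mul_distInt_sub_isBigO hδ two_pos (by norm_num))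
  exact ⟨y, fun k hk => hgcd k ▸ hx.gcd_nearInt_add_four_dvd_two hk, hy⟩

theorem distInt_mul_cube_sub_isBigO (hx : MarkoffSeq ξ x) :
    (fun k => distInt (x k 0 0 * ξ ^ 3) - distInt (x k 1 1 * ξ)) =O[atTop]
      fun k => (Xnorm x k)⁻¹ := by
  have h : (fun k => ξ ^ 2 * (x k 0 0 * ξ - x k 0 1) + ξ * (x k 0 1 * ξ - x k 1 1)) =O[atTop]
      fun k => (Xnorm x k)⁻¹ :=
    ((hx.entry_mul_sub_isBigO 0).const_mul_left _).add
      ((hx.entry_mul_sub_isBigO 1).const_mul_left _)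
  refine IsBigO.trans (isBigO_of_le _ fun k => (abs_distInt_sub_le _ _).trans_eq ?_) h
  rw [Real.norm_eq_abs]
  ring_nf

theorem tendsto_distInt_mul_cube (hx : MarkoffSeq ξ x) (hper : Function.Periodic δ 3)
    (hδ : (fun k => distInt (x k 1 1 * ξ) - δ k) =O[atTop] fun k => (Xnorm x k)⁻¹) (ℓ : ℕ) :
    Tendsto (fun i : ℕ => distInt (x (ℓ + 6 * i) 0 0 * ξ ^ 3)) atTop (𝓝 (δ ℓ)) := by
  have hsub : Tendsto (fun i : ℕ => ℓ + 6 * i) atTop atTop :=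
    tendsto_atTop_mono (fun i => show i ≤ ℓ + 6 * i by lia) tendsto_id
  have h := ((hx.distInt_mul_cube_sub_isBigO.add hδ).trans_tendsto
    hx.tendsto_Xnorm.inv_tendsto_atTop).comp hsub
  refine tendsto_sub_nhds_zero_iff.1 (h.congr fun i => ?_)
  have hconst : δ (ℓ + 6 * i) = δ ℓ :=
    eq_of_periodic_of_mod_eq hper (by lia)
  simp only [Function.comp_apply, sub_add_sub_cancel, hconst]

end Asymptotics

end MarkoffSeq

/-- Enumerates, in increasing order, the integers `k ≥ 1` not congruent to `ℓ` modulo `3`, where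
`ℓ ∈ {1, 2, 3}`: the summand `(n + 3 - ℓ) / 2` counts the integers skipped so far. -/
def skipIndex (ℓ n : ℕ) : ℕ := n + 1 + (n + 3 - ℓ) / 2

section SkipIndex

variable {ℓ : ℕ}

theorem one_le_skipIndex (ℓ n : ℕ) : 1 ≤ skipIndex ℓ n := by
  rw [skipIndex]
  lia

theorem skipIndex_succ (hℓ : ℓ ∈ ({1, 2, 3} : Set ℕ)) (n : ℕ) :
    skipIndex ℓ (n + 1) = if skipIndex ℓ n % 3 = (ℓ + 1) % 3 then skipIndex ℓ n + 1
      else skipIndex ℓ n + 2 := by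
  rcases hℓ with rfl | rfl | rfl <;> (simp only [skipIndex]; split_ifs <;> lia)

theorem skipIndex_mod_three_ne (hℓ : ℓ ∈ ({1, 2, 3} : Set ℕ)) (n : ℕ) :
    skipIndex ℓ n % 3 ≠ ℓ % 3 := by
  rcases hℓ with rfl | rfl | rfl <;> (simp only [skipIndex]; lia)

theorem exists_skipIndex_eq (hℓ : ℓ ∈ ({1, 2, 3} : Set ℕ)) {k : ℕ} (hk : 1 ≤ k)
    (hkℓ : k % 3 ≠ ℓ % 3) : ∃ n, skipIndex ℓ n = k := by
  refine ⟨k - 1 - (k + 2 - ℓ) / 3, ?_⟩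
  rcases hℓ with rfl | rfl | rfl <;> (simp only [skipIndex]; lia)

theorem skipIndex_strictMono (ℓ : ℕ) : StrictMono (skipIndex ℓ) :=
  strictMono_nat_of_lt_succ fun n => by
    simp only [skipIndex]
    lia

theorem tendsto_skipIndex (ℓ : ℕ) : Tendsto (skipIndex ℓ) atTop atTop :=
  (skipIndex_strictMono ℓ).tendsto_atTop

theorem inv_Xnorm_skipIndex_succ (x : ℕ → Matrix (Fin 2) (Fin 2) ℤ)
    (hℓ : ℓ ∈ ({1, 2, 3} : Set ℕ)) (n : ℕ) :
    (Xnorm x (skipIndex ℓ (n + 1)))⁻¹ =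
      if skipIndex ℓ n % 3 = (ℓ + 1) % 3 then (Xnorm x (skipIndex ℓ n + 1))⁻¹
      else (Xnorm x (skipIndex ℓ n + 2))⁻¹ := by
  rw [skipIndex_succ hℓ]
  split_ifs <;> rfl

end SkipIndex

namespace MarkoffSeq

section SkippedSubsequence

open Asymptotics Topology

variable {ξ : ℝ} {x : ℕ → Matrix (Fin 2) (Fin 2) ℤ} {ℓ : ℕ}

theorem zero_zero_comp_isTheta (hx : MarkoffSeq ξ x) {s : ℕ → ℕ} (hs : Tendsto s atTop atTop) :
    (fun n => (x (s n) 0 0 : ℝ)) =Θ[atTop] fun n => Xnorm x (s n) :=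
  ⟨hx.zero_zero_isTheta.1.comp_tendsto hs, hx.zero_zero_isTheta.2.comp_tendsto hs⟩

theorem tendsto_abs_zero_zero_skipIndex (hx : MarkoffSeq ξ x) (ℓ : ℕ) :
    Tendsto (fun n => |(x (skipIndex ℓ n) 0 0 : ℝ)|) atTop atTop :=
  (hx.zero_zero_comp_isTheta (tendsto_skipIndex ℓ)).tendsto_norm_atTop_iff.2 <|
    tendsto_norm_atTop_atTop.comp <| hx.tendsto_Xnorm.comp (tendsto_skipIndex ℓ)

theorem zero_zero_skipIndex_isLittleO_succ (hx : MarkoffSeq ξ x) (ℓ : ℕ) :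
    (fun n => (x (skipIndex ℓ n) 0 0 : ℝ)) =o[atTop]
      fun n => (x (skipIndex ℓ (n + 1)) 0 0 : ℝ) := by
  have hs := tendsto_skipIndex ℓ
  have hle : (fun n => Xnorm x (skipIndex ℓ n + 1)) =O[atTop]
      fun n => Xnorm x (skipIndex ℓ (n + 1)) := isBigO_of_le _ fun n => by
    rw [Real.norm_of_nonneg (hx.Xnorm_pos (by lia)).le,
      Real.norm_of_nonneg (hx.Xnorm_pos (one_le_skipIndex ℓ _)).le]
    exact hx.Xnorm_le_Xnorm (by lia) (skipIndex_strictMono ℓ n.lt_succ_self)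
  exact (hx.zero_zero_comp_isTheta hs).trans_isLittleO <|
    ((hx.Xnorm_isLittleO_succ.comp_tendsto hs).trans_isBigO hle).trans_isTheta
      (hx.zero_zero_comp_isTheta ((tendsto_add_atTop_iff_nat 1).2 hs)).symm

theorem inv_zero_zero_skipIndex_succ_isTheta (hx : MarkoffSeq ξ x) (ℓ : ℕ) :
    (fun n => (x (skipIndex ℓ (n + 1)) 0 0 : ℝ)⁻¹) =Θ[atTop]
      fun n => (Xnorm x (skipIndex ℓ (n + 1)))⁻¹ :=
  (hx.zero_zero_comp_isTheta ((tendsto_add_atTop_iff_nat 1).2 (tendsto_skipIndex ℓ))).inv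

theorem exists_mul_sub_skipIndex_isBigO (hx : MarkoffSeq ξ x) (hℓ : ℓ ∈ ({1, 2, 3} : Set ℕ)) :
    ∃ δ : ℝ, Tendsto (fun i : ℕ => distInt (x (ℓ + 6 * i) 0 0 * ξ ^ 3)) atTop (𝓝 δ) ∧
      ∃ y : ℕ → ℤ, (∀ k, 1 ≤ k → Int.gcd (x k 0 0) (y k) ∣ 2) ∧
        (fun n => x (skipIndex ℓ n) 0 0 * δ - y (skipIndex ℓ n)) =O[atTop]
          fun n => (x (skipIndex ℓ (n + 1)) 0 0 : ℝ)⁻¹ := by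
  obtain ⟨δ, hper, hδ⟩ := hx.exists_periodic_distInt_sub_isBigO
  obtain ⟨y₁, hgcd₁, hy₁⟩ := hx.exists_mul_sub_isBigO_succ hδ
  obtain ⟨y₂, hgcd₂, hy₂⟩ := hx.exists_mul_sub_isBigO_add_two hδ
  refine ⟨δ ℓ, hx.tendsto_distInt_mul_cube hper hδ ℓ,
    fun k => if k % 3 = (ℓ + 1) % 3 then y₁ k else y₂ k, fun k hk => ?_, ?_⟩
  · dsimp only
    split_ifs
    exacts [hgcd₁ k hk, hgcd₂ k hk]
  · have hite := (isBigO_ite (fun k => k % 3 = (ℓ + 1) % 3) hy₁ hy₂).comp_tendsto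
      (tendsto_skipIndex ℓ)
    refine (hite.congr (fun n => ?_) fun n => (inv_Xnorm_skipIndex_succ x hℓ n).symm).trans
      (hx.inv_zero_zero_skipIndex_succ_isTheta ℓ).2
    have hne := skipIndex_mod_three_ne hℓ n
    simp only [Function.comp_apply]
    split_ifs with h
    · rw [eq_of_periodic_of_mod_eq hper (m := skipIndex ℓ n + 2) (n := ℓ) (by lia)]
    · rw [eq_of_periodic_of_mod_eq hper (m := skipIndex ℓ n + 4) (n := ℓ) (by lia)]

end SkippedSubsequence

end MarkoffSeq

theorem stmt12 (ξ : ℝ) (x : ℕ → Matrix (Fin 2) (Fin 2) ℤ) (hx : MarkoffSeq ξ x)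
    (ℓ : ℕ) (hℓ : ℓ ∈ ({1, 2, 3} : Set ℕ)) :
    ∃ δ : ℝ,
      Tendsto (fun i : ℕ => distInt ((x (ℓ+6*i) 0 0 : ℝ) * ξ^3)) atTop (nhds δ) ∧
      ∃ y : ℕ → ℤ, ∃ c₄ c₅ : ℝ, 0 < c₄ ∧ 0 < c₅ ∧
        (∀ k, 1 ≤ k → k % 3 ≠ ℓ % 3 →
          (Int.gcd (x k 0 0) (y k) ∣ 2) ∧
          c₄ * (if k % 3 = (ℓ+1) % 3 then (Xnorm x (k+1))⁻¹ else (Xnorm x (k+2))⁻¹)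
            ≤ |(x k 0 0 : ℝ) * δ - (y k : ℝ)| ∧
          |(x k 0 0 : ℝ) * δ - (y k : ℝ)|
            ≤ c₅ * (if k % 3 = (ℓ+1) % 3 then (Xnorm x (k+1))⁻¹ else (Xnorm x (k+2))⁻¹)) ∧
        (∃ N : ℕ, ∀ k, N ≤ k → k % 3 ≠ ℓ % 3 →
          (∃ n : ℕ, (GenContFract.of δ).convs n = (y k : ℝ) / (x k 0 0 : ℝ)) ∧
          (((y k : ℚ) / (x k 0 0 : ℚ)).den = (x k 0 0).natAbs ∨
            2 * ((y k : ℚ) / (x k 0 0 : ℚ)).den = (x k 0 0).natAbs)) ∧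
        ∃ c₆ c₇ : ℝ, 0 < c₆ ∧ 0 < c₇ ∧
          ∀ p : ℤ, ∀ q : ℕ, 0 < q → Nat.Coprime p.natAbs q →
            (∃ n : ℕ, (GenContFract.of δ).convs n = (p : ℝ) / (q : ℝ)) →
            (∀ k, 1 ≤ k → k % 3 ≠ ℓ % 3 →
              (p : ℚ) / (q : ℚ) ≠ (y k : ℚ) / (x k 0 0 : ℚ)) →
            c₆ / q ≤ |(q : ℝ) * δ - (p : ℝ)| ∧ |(q : ℝ) * δ - (p : ℝ)| ≤ c₇ / q := by
  obtain ⟨δ, hδ, y, hgcd, happ⟩ := hx.exists_mul_sub_skipIndex_isBigO hℓ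
  have hs := one_le_skipIndex ℓ
  have ha (n : ℕ) : x (skipIndex ℓ n) 0 0 ≠ 0 := hx.zero_zero_ne_zero (hs n)
  have hatop := hx.tendsto_abs_zero_zero_skipIndex ℓ
  have hgrow := hx.zero_zero_skipIndex_isLittleO_succ ℓ
  have hθ := mul_sub_isTheta_inv ha hgrow happ
    (eventually_mul_ne_mul two_ne_zero ha (fun n => hgcd _ (hs n)) hgrow)
  have hirr : Irrational δ := irrational_of_isTheta_inv ha hatop hθ
  obtain ⟨c₄, hc₄, c₅, hc₅, hbounds⟩ := exists_bounds_of_isTheta_atTop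
    (hθ.trans (hx.inv_zero_zero_skipIndex_succ_isTheta ℓ))
    (fun n => ((hirr.intCast_mul (ha n)).sub_intCast _).ne_zero)
    (fun n => inv_ne_zero (hx.Xnorm_pos (hs (n + 1))).ne')
  obtain ⟨N, hN⟩ := eventually_atTop.1 (eventually_exists_convs_eq_div ha hgrow happ)
  obtain ⟨c₆, hc₆, hother⟩ := exists_forall_div_le_abs_mul_sub ha hatop happ
  refine ⟨δ, hδ, y, c₄, c₅, hc₄, hc₅, fun k hk hkℓ => ⟨hgcd k hk, ?_⟩,
    ⟨skipIndex ℓ N, fun k hk hkℓ => ?_⟩, c₆, 1, hc₆, one_pos, fun p q hq hpq ⟨n, hn⟩ hne =>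
      ⟨hother p q hq fun m => hne _ (hs m) (skipIndex_mod_three_ne hℓ m),
        abs_mul_sub_le_of_convs_eq hq hpq hn⟩⟩
  · obtain ⟨n, rfl⟩ := exists_skipIndex_eq hℓ hk hkℓ
    rw [← inv_Xnorm_skipIndex_succ x hℓ,
      ← Real.norm_of_nonneg (inv_nonneg.2 (hx.Xnorm_pos (hs (n + 1))).le)]
    exact hbounds n
  · obtain ⟨n, rfl⟩ := exists_skipIndex_eq hℓ ((hs N).trans hk) hkℓ
    exact ⟨hN n ((skipIndex_strictMono ℓ).le_iff_le.1 hk),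
      den_div_of_gcd_dvd_two (ha n) (hgcd _ (hs n))⟩
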